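/- Let p ∈ (1/2, 1). For every n ≥ 1 and every integer k with np ≤ k ≤ n − 1, one has log( √(np(1−p)) · f_{n,k} / φ(z_{n,k+1}) ) ≤ α(k/n)·n + β_n(k/n), where α(w) = −w·log w − (1−w)·log(1−w) + w²/(2p(1−p)) + (log(p/(1−p)) − 1/(1−p))·w + p/(2(1−p)) + log(1−p) and β_n(w) = −(1/2)·log(w(1−w)) + w/(p(1−p)) − log 2 − 1/(1−p) + (1/12 + 1/(2p(1−p)))·(1/n). -/

import Mathlib

open MeasureTheory Filter

/-- The standard normal density. -/
noncomputable def normalPdf (x : ℝ) : ℝ := Real.exp (-x ^ 2 / 2) / Real.sqrt (2 * Real.pi)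

/-- Binomial probabilities `f_{n,k} = (n choose k) p^k (1-p)^(n-k)`. -/
noncomputable def binProb (p : ℝ) (n k : ℕ) : ℝ := (n.choose k : ℝ) * p ^ k * (1 - p) ^ (n - k)

/-- Standardized points `z_{n,k} = (k - np)/√(np(1-p))` (also used for `k = n+1`, `k = -1`). -/
noncomputable def zpt (p : ℝ) (n : ℕ) (k : ℤ) : ℝ :=
  ((k : ℝ) - n * p) / Real.sqrt (n * p * (1 - p))


/-- The exponential-rate function in the binomial-vs-Gaussian comparison with
up-probability `p`. -/
noncomputable def αAsym (p w : ℝ) : ℝ :=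
  -w * Real.log w - (1 - w) * Real.log (1 - w) + w ^ 2 / (2 * p * (1 - p)) +
    (Real.log (p / (1 - p)) - 1 / (1 - p)) * w + p / (2 * (1 - p)) + Real.log (1 - p)

/-- The lower-order correction term in the binomial-vs-Gaussian comparison with
up-probability `p`. -/
noncomputable def βAsym (p : ℝ) (n : ℕ) (w : ℝ) : ℝ :=
  -(1 / 2) * Real.log (w * (1 - w)) + w / (p * (1 - p)) - Real.log 2 - 1 / (1 - p) +
    (1 / 12 + 1 / (2 * p * (1 - p))) * (1 / n)

lemma log_factorial_upper {n : ℕ} (hn : 1 ≤ n) :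
    Real.log (n.factorial : ℝ) ≤ n * Real.log n - n + Real.log n / 2
      + Real.log (2 * Real.pi) / 2 + 1 / (12 * n) := by
  let h : ℕ → ℝ := fun j => Real.log (Stirling.stirlingSeq (j + 1)) - 1 / (12 * ((j : ℝ) + 1))
  have hmono : Monotone h := by
    apply monotone_nat_of_le_succ
    intro j
    have h1 := Stirling.log_stirlingSeq_sdiff_le (j + 1)
    have h2 : (1 : ℝ) / (12 * ((j + 1 : ℕ) : ℝ) * (((j + 1 : ℕ) : ℝ) + 1))
        = 1 / (12 * ((j : ℝ) + 1)) - 1 / (12 * (((j + 1 : ℕ) : ℝ) + 1)) := by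
      push_cast
      field_simp
      ring
    rw [h2] at h1
    simp only [h]
    linarith
  have hpi : (0 : ℝ) < Real.sqrt Real.pi := Real.sqrt_pos.mpr Real.pi_pos
  have hlim : Tendsto h atTop (nhds (Real.log (Real.sqrt Real.pi) - 0)) := by
    apply Tendsto.sub
    · exact (Stirling.tendsto_stirlingSeq_sqrt_pi.comp (tendsto_add_atTop_nat 1)).log hpi.ne'
    · have h3 := (tendsto_one_div_add_atTop_nhds_zero_nat (𝕜 := ℝ)).const_mul (1 / 12 : ℝ)
      rw [mul_zero] at h3
      refine h3.congr fun j => ?_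
      field_simp
  obtain ⟨m, rfl⟩ : ∃ m, n = m + 1 := ⟨n - 1, by omega⟩
  have hle := hmono.ge_of_tendsto hlim m
  simp only [h] at hle
  have hpos : (0 : ℝ) < ((m + 1 : ℕ) : ℝ) := by positivity
  rw [Stirling.log_stirlingSeq_formula, Real.log_sqrt Real.pi_pos.le,
    Real.log_mul (by norm_num) hpos.ne', Real.log_div hpos.ne' (Real.exp_pos 1).ne',
    Real.log_exp] at hle
  rw [Real.log_mul (by norm_num) Real.pi_pos.ne']
  push_cast at hle ⊢
  linarith

theorem log_ratio_bounded_by_rate_function_asymmetric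
    (p : ℝ) (hp : p ∈ Set.Ioo (1 / 2 : ℝ) 1) :
    ∀ n : ℕ, 1 ≤ n → ∀ k : ℕ, (n : ℝ) * p ≤ k → k ≤ n - 1 →
      Real.log (Real.sqrt (n * p * (1 - p)) * binProb p n k / normalPdf (zpt p n (k + 1))) ≤
        αAsym p ((k : ℝ) / n) * n + βAsym p n ((k : ℝ) / n) := by
  intro n hn k hk hkn
  obtain ⟨hp1, hp2⟩ := hp
  have hp0 : 0 < p := by linarith
  have hn0 : (0 : ℝ) < n := by exact_mod_cast hn
  have hk0 : (0 : ℝ) < k := lt_of_lt_of_le (by positivity) hk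
  have hkN : 0 < k := by exact_mod_cast hk0
  obtain ⟨m, rfl⟩ : ∃ m, n = k + m := ⟨n - k, by omega⟩
  have hmN : 0 < m := by omega
  have hm0 : (0 : ℝ) < m := by exact_mod_cast hmN
  obtain ⟨q, hq⟩ : ∃ q, q = 1 - p := ⟨_, rfl⟩
  have hq0 : 0 < q := by linarith
  have hpq : p = 1 - q := by linarith
  have hchoose : Real.log ((k + m).choose k : ℝ) = Real.log ((k + m).factorial : ℝ)
      - Real.log (k.factorial : ℝ) - Real.log (m.factorial : ℝ) := by
    have h1 : ((k + m).choose k : ℝ) * k.factorial * m.factorial = (k + m).factorial := by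
      have := Nat.choose_mul_factorial_mul_factorial (n := k + m) (k := k) (by omega)
      rw [Nat.add_sub_cancel_left] at this
      exact_mod_cast this
    have hc : (0 : ℝ) < ((k + m).choose k : ℝ) := by
      exact_mod_cast Nat.choose_pos (by omega)
    rw [← h1, Real.log_mul (by positivity) (by positivity),
      Real.log_mul (by positivity) (by positivity)]
    ring
  have hU := log_factorial_upper hn
  have hLk := Stirling.le_log_factorial_stirling hkN.ne'
  have hLm := Stirling.le_log_factorial_stirling hmN.ne'
  have hc : (0 : ℝ) < ((k + m).choose k : ℝ) := by
    exact_mod_cast Nat.choose_pos (by omega)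
  have hquarter : Real.log p + Real.log q ≤ -2 * Real.log 2 := by
    rw [← Real.log_mul hp0.ne' hq0.ne']
    have : -2 * Real.log 2 = Real.log (1 / 4) := by
      rw [show (1 / 4 : ℝ) = (2 ^ 2)⁻¹ by norm_num, Real.log_inv, Real.log_pow]
      push_cast; ring
    rw [this]
    apply Real.log_le_log (by positivity)
    rw [hpq]
    nlinarith [sq_nonneg (q - 1 / 2)]
  have hz : zpt p (k + m) (k + 1) ^ 2 / 2
      = ((k : ℝ) + 1 - (k + m) * p) ^ 2 / (2 * ((k + m) * p * q)) := by
    unfold zpt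
    rw [← hq, div_pow, Real.sq_sqrt (by positivity)]
    push_cast
    field_simp
  unfold binProb normalPdf αAsym βAsym
  rw [← hq, Nat.add_sub_cancel_left]
  have hw1 : (1 : ℝ) - (k : ℝ) / ((k + m : ℕ) : ℝ) = m / ((k + m : ℕ) : ℝ) := by
    push_cast
    field_simp
    ring
  rw [hw1, Real.log_div (by positivity) (by positivity),
    Real.log_div (by positivity) (by positivity), Real.log_exp,
    Real.log_mul (by positivity) (by positivity), Real.log_mul (by positivity) (by positivity),
    Real.log_mul (by positivity) (by positivity), hchoose,
    Real.log_sqrt (by positivity), Real.log_sqrt (by positivity),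
    Real.log_mul (x := _ * _) (by positivity) (by positivity),
    Real.log_mul (x := ((k + m : ℕ) : ℝ)) (by positivity) (by positivity),
    Real.log_pow, Real.log_pow,
    Real.log_mul (x := _ / _) (by positivity) (by positivity),
    Real.log_div (x := (k : ℝ)) (by positivity) (by positivity),
    Real.log_div (x := (m : ℝ)) (by positivity) (by positivity),
    Real.log_div (x := p) (by positivity) (by positivity), neg_div, hz]
  have hN : ((k + m : ℕ) : ℝ) = (k : ℝ) + m := by push_cast; ring
  rw [hN] at hU ⊢
  generalize Real.log ((k : ℝ) + m) = LN at *
  generalize Real.log (k : ℝ) = Lk at *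
  generalize Real.log (m : ℝ) = Lm at *
  generalize Real.log p = Lp at *
  generalize Real.log q = Lq at *
  generalize Real.log (2 * Real.pi) = Lpi at *
  generalize Real.log 2 = L2 at *
  generalize (k : ℝ) = x at *
  generalize (m : ℝ) = y at *
  have key : (-(x / (x + y)) * (Lk - LN) - y / (x + y) * (Lm - LN) + (x / (x + y)) ^ 2 / (2 * p * q)
        + (Lp - Lq - 1 / q) * (x / (x + y)) + p / (2 * q) + Lq) * (x + y)
      + (-(1 / 2) * (Lk - LN + (Lm - LN)) + x / (x + y) / (p * q) - L2 - 1 / q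
        + (1 / 12 + 1 / (2 * p * q)) * (1 / (x + y)))
      = -x * Lk - y * Lm + (x + y) * LN + x * Lp + y * Lq - Lk / 2 - Lm / 2 + LN - L2
        + 1 / (12 * (x + y)) + (x + 1 - (x + y) * p) ^ 2 / (2 * ((x + y) * p * q)) := by
    field_simp
    ring
  rw [key]
  linarith
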